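/- (S-level pairs) Let n ≥ 3. Let l and x be elements of one level L₁ of M_{n,n} with l the link element of L₁ and x ≠ l, and let L₂ be the other level. If S = L₂ and T = {l, x}, then (S, T) is a maximal ST-pair of M_{n,n}. -/

import Mathlib

set_option linter.unreachableTactic false
set_option linter.unusedTactic false
set_option linter.unnecessarySeqFocus false

/-- The underlying set of the lattice `M_{n,n}`: a bottom element `0`, a top
element `1`, and two levels `a₁, …, aₙ` and `b₁, …, bₙ`.  Here `a i` (for
`i : Fin n`) stands for `a_{i+1}` and `b j` for `b_{j+1}`, so the link elements
are `aₙ = a ⟨n-1, _⟩` and `b₁ = b ⟨0, _⟩`. -/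
inductive Mnn (n : ℕ) : Type where
  | bot : Mnn n
  | top : Mnn n
  | a : Fin n → Mnn n
  | b : Fin n → Mnn n
deriving DecidableEq

namespace Mnn

/-- The order of `M_{n,n}`: `0` is least, `1` is greatest, `aᵢ ≤ b₁` for every
`i`, `aₙ ≤ bⱼ` for every `j`, and there are no other comparabilities besides
those forced by reflexivity. -/
def le {n : ℕ} : Mnn n → Mnn n → Prop
  | .bot, _ => True
  | .top, .top => True
  | .top, .bot => False
  | .top, .a _ => False
  | .top, .b _ => False
  | .a _, .top => True
  | .a _, .bot => False
  | .a i, .a j => i = j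
  | .a i, .b j => (j : ℕ) = 0 ∨ (i : ℕ) = n - 1
  | .b _, .top => True
  | .b _, .bot => False
  | .b _, .a _ => False
  | .b i, .b j => i = j

/-- The join operation of `M_{n,n}`. -/
def sup {n : ℕ} : Mnn n → Mnn n → Mnn n
  | .bot, x => x
  | .top, _ => .top
  | .a i, .bot => .a i
  | .a _, .top => .top
  | .a i, .a j => if i = j then .a i else .b ⟨0, Nat.lt_of_le_of_lt (Nat.zero_le _) i.isLt⟩
  | .a i, .b j => if (j : ℕ) = 0 ∨ (i : ℕ) = n - 1 then .b j else .top
  | .b i, .bot => .b i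
  | .b _, .top => .top
  | .b i, .a j => if (i : ℕ) = 0 ∨ (j : ℕ) = n - 1 then .b i else .top
  | .b i, .b j => if i = j then .b i else .top

/-- The meet operation of `M_{n,n}`. -/
def inf {n : ℕ} : Mnn n → Mnn n → Mnn n
  | .bot, _ => .bot
  | .top, x => x
  | .a _, .bot => .bot
  | .a i, .top => .a i
  | .a i, .a j => if i = j then .a i else .bot
  | .a i, .b j => if (j : ℕ) = 0 ∨ (i : ℕ) = n - 1 then .a i else .bot
  | .b _, .bot => .bot
  | .b i, .top => .b i
  | .b i, .a j => if (i : ℕ) = 0 ∨ (j : ℕ) = n - 1 then .a j else .bot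
  | .b i, .b j => if i = j then .b i
      else .a ⟨n - 1, Nat.sub_lt (Nat.lt_of_le_of_lt (Nat.zero_le _) i.isLt) Nat.one_pos⟩

theorem le_refl' {n : ℕ} (x : Mnn n) : le x x := by cases x <;> simp [le]

theorem le_trans' {n : ℕ} (x y z : Mnn n) (hxy : le x y) (hyz : le y z) : le x z := by
  cases x <;> cases y <;> cases z <;> simp_all [le] <;> omega

theorem le_antisymm' {n : ℕ} (x y : Mnn n) (hxy : le x y) (hyx : le y x) : x = y := by
  cases x <;> cases y <;> simp_all [le]

theorem le_sup_left' {n : ℕ} (x y : Mnn n) : le x (sup x y) := by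
  cases x <;> cases y <;> dsimp only [sup] <;> (try split_ifs) <;> simp_all [le]

theorem le_sup_right' {n : ℕ} (x y : Mnn n) : le y (sup x y) := by
  cases x <;> cases y <;> dsimp only [sup] <;> (try split_ifs) <;> simp_all [le]

theorem sup_le' {n : ℕ} (x y z : Mnn n) (hxz : le x z) (hyz : le y z) :
    le (sup x y) z := by
  cases x <;> cases y <;> cases z <;> dsimp only [sup] <;> (try split_ifs) <;>
    simp_all [le, Fin.ext_iff] <;> omega

theorem inf_le_left' {n : ℕ} (x y : Mnn n) : le (inf x y) x := by
  cases x <;> cases y <;> dsimp only [inf] <;> (try split_ifs) <;> simp_all [le]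

theorem inf_le_right' {n : ℕ} (x y : Mnn n) : le (inf x y) y := by
  cases x <;> cases y <;> dsimp only [inf] <;> (try split_ifs) <;> simp_all [le]

theorem le_inf' {n : ℕ} (x y z : Mnn n) (hxy : le x y) (hxz : le x z) :
    le x (inf y z) := by
  cases x <;> cases y <;> cases z <;> dsimp only [inf] <;> (try split_ifs) <;>
    simp_all [le, Fin.ext_iff] <;> omega

/-- `M_{n,n}` is a lattice. -/
instance instLattice (n : ℕ) : Lattice (Mnn n) where
  le := le
  sup := sup
  inf := inf
  le_refl := le_refl'
  le_trans := le_trans'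
  le_antisymm := le_antisymm'
  le_sup_left := le_sup_left'
  le_sup_right := le_sup_right'
  sup_le := sup_le'
  inf_le_left := inf_le_left'
  inf_le_right := inf_le_right'
  le_inf := le_inf'

/-- `M_{n,n}* = M_{n,n} ∖ {0, 1}`, the set of non-identity elements. -/
def star (n : ℕ) : Set (Mnn n) := {x | x ≠ .bot ∧ x ≠ .top}

/-- The level `{a₁, …, aₙ}` of `M_{n,n}`. -/
def aLevel (n : ℕ) : Set (Mnn n) := Set.range Mnn.a

/-- The level `{b₁, …, bₙ}` of `M_{n,n}`. -/
def bLevel (n : ℕ) : Set (Mnn n) := Set.range Mnn.b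

/-- The link element `aₙ` of the level `{a₁, …, aₙ}`. -/
def aLink (n : ℕ) (h : 0 < n) : Mnn n := .a ⟨n - 1, Nat.sub_lt h Nat.one_pos⟩

/-- The link element `b₁` of the level `{b₁, …, bₙ}`. -/
def bLink (n : ℕ) (h : 0 < n) : Mnn n := .b ⟨0, h⟩

end Mnn

/-- `L` is `ST`-meet distributive. -/
def IsSTMeetDistrib {α : Type*} [Lattice α] (S T : Set α) : Prop :=
  ∀ s ∈ S, ∀ t₁ ∈ T, ∀ t₂ ∈ T, s ⊓ (t₁ ⊔ t₂) = (s ⊓ t₁) ⊔ (s ⊓ t₂)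

/-- `L` is `ST`-join distributive. -/
def IsSTJoinDistrib {α : Type*} [Lattice α] (S T : Set α) : Prop :=
  ∀ s ∈ S, ∀ t₁ ∈ T, ∀ t₂ ∈ T, s ⊔ (t₁ ⊓ t₂) = (s ⊔ t₁) ⊓ (s ⊔ t₂)

/-- `L` is `ST`-distributive. -/
def IsSTDistrib {α : Type*} [Lattice α] (S T : Set α) : Prop :=
  IsSTMeetDistrib S T ∧ IsSTJoinDistrib S T

/-- `(S, T)` is a maximal `ST`-pair of `M_{n,n}` (subject to the conditions of
the search problem: `S, T ⊆ M_{n,n}*`, `S ∩ T = ∅`, `S ≠ ∅`, `T ≠ ∅`). -/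
def MaximalSTPair (n : ℕ) (S T : Set (Mnn n)) : Prop :=
  S ⊆ Mnn.star n ∧ T ⊆ Mnn.star n ∧ S ∩ T = ∅ ∧ S.Nonempty ∧ T.Nonempty ∧
  IsSTDistrib S T ∧
  (¬ ∃ S' : Set (Mnn n), S ⊂ S' ∧ S' ⊆ Mnn.star n ∧ S' ∩ T = ∅ ∧ IsSTDistrib S' T) ∧
  (¬ ∃ T' : Set (Mnn n), T ⊂ T' ∧ T' ⊆ Mnn.star n ∧ S ∩ T' = ∅ ∧ IsSTDistrib S T')

namespace Mnn

variable {n : ℕ}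

theorem inf_eq (x y : Mnn n) : x ⊓ y = inf x y := rfl

theorem sup_eq (x y : Mnn n) : x ⊔ y = sup x y := rfl

theorem mem_star_of_mem_aLevel {x : Mnn n} (hx : x ∈ aLevel n) : x ∈ star n := by
  obtain ⟨i, rfl⟩ := hx
  simp [star]

theorem mem_star_of_mem_bLevel {x : Mnn n} (hx : x ∈ bLevel n) : x ∈ star n := by
  obtain ⟨i, rfl⟩ := hx
  simp [star]

theorem mem_aLevel_or_mem_bLevel {x : Mnn n} (hx : x ∈ star n) :
    x ∈ aLevel n ∨ x ∈ bLevel n := by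
  cases x <;> simp_all [star, aLevel, bLevel]

theorem disjoint_aLevel_bLevel : Disjoint (aLevel n) (bLevel n) := by
  rw [Set.disjoint_left]
  rintro _ ⟨i, rfl⟩ ⟨j, h⟩
  cases h

theorem isSTDistrib_bLevel (hn : 0 < n) (i : Fin n) :
    IsSTDistrib (bLevel n) {aLink n hn, a i} := by
  constructor <;> rintro _ ⟨j, rfl⟩ t₁ (rfl | rfl) t₂ (rfl | rfl) <;>
    simp only [inf_eq, sup_eq, aLink] <;> grind [inf, sup]

theorem isSTDistrib_aLevel (hn : 0 < n) (j : Fin n) :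
    IsSTDistrib (aLevel n) {bLink n hn, b j} := by
  constructor <;> rintro _ ⟨i, rfl⟩ t₁ (rfl | rfl) t₂ (rfl | rfl) <;>
    simp only [inf_eq, sup_eq, bLink] <;> grind [inf, sup]

/-- Three distinct elements of the level `{a₁, …, aₙ}` violate meet distributivity. -/
theorem a_inf_sup_ne {i j k : Fin n} (hij : i ≠ j) (hki : k ≠ i) (hkj : k ≠ j) :
    a k ⊓ (a i ⊔ a j) ≠ (a k ⊓ a i) ⊔ (a k ⊓ a j) := by
  simp [inf_eq, sup_eq, inf, sup, hij, hki, hkj]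

/-- Three distinct elements of the level `{b₁, …, bₙ}` violate join distributivity. -/
theorem b_sup_inf_ne {i j k : Fin n} (hij : i ≠ j) (hki : k ≠ i) (hkj : k ≠ j) :
    b k ⊔ (b i ⊓ b j) ≠ (b k ⊔ b i) ⊓ (b k ⊔ b j) := by
  simp [inf_eq, sup_eq, inf, sup, hij, hki, hkj]

/-- Two distinct non-link elements of `{a₁, …, aₙ}` violate meet distributivity with any
non-link element of `{b₁, …, bₙ}`. -/
theorem b_inf_sup_ne {i j k : Fin n} (hij : i ≠ j) (hi : (i : ℕ) ≠ n - 1)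
    (hj : (j : ℕ) ≠ n - 1) (hk : (k : ℕ) ≠ 0) :
    b k ⊓ (a i ⊔ a j) ≠ (b k ⊓ a i) ⊔ (b k ⊓ a j) := by
  simp [inf_eq, sup_eq, inf, sup, hij, hi, hj, hk, Fin.ext_iff]

/-- Two distinct non-link elements of `{b₁, …, bₙ}` violate join distributivity with any
non-link element of `{a₁, …, aₙ}`. -/
theorem a_sup_inf_ne {i j k : Fin n} (hij : i ≠ j) (hi : (i : ℕ) ≠ 0)
    (hj : (j : ℕ) ≠ 0) (hk : (k : ℕ) ≠ n - 1) :
    a k ⊔ (b i ⊓ b j) ≠ (a k ⊔ b i) ⊓ (a k ⊔ b j) := by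
  simp [inf_eq, sup_eq, inf, sup, hij, hi, hj, hk, Fin.ext_iff]

theorem maximalSTPair_bLevel (hn : 2 ≤ n) {i : Fin n} (hi : a i ≠ aLink n (by omega)) :
    MaximalSTPair n (bLevel n) {aLink n (by omega), a i} := by
  have hT : ({aLink n (by omega), a i} : Set (Mnn n)) ⊆ aLevel n := by
    rintro _ (rfl | rfl) <;> exact ⟨_, rfl⟩
  have hi' : (i : ℕ) ≠ n - 1 := fun h => hi (by simp [aLink, ← h])
  refine ⟨fun _ => mem_star_of_mem_bLevel, fun _ hx => mem_star_of_mem_aLevel (hT hx),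
    (disjoint_aLevel_bLevel.symm.mono_right hT).inter_eq, ⟨_, ⟨0, by omega⟩, rfl⟩,
    ⟨_, Or.inl rfl⟩, isSTDistrib_bLevel _ i, ?_, ?_⟩
  · rintro ⟨S', hSS', hS', hdisj, hdist⟩
    obtain ⟨x, hxS', hx⟩ := Set.exists_of_ssubset hSS'
    obtain ⟨k, rfl⟩ := (mem_aLevel_or_mem_bLevel (hS' hxS')).resolve_right hx
    have hk : a k ∉ ({aLink n (by omega), a i} : Set (Mnn n)) :=
      Set.disjoint_left.mp (Set.disjoint_iff_inter_eq_empty.mpr hdisj) hxS'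
    simp only [aLink, Set.mem_insert_iff, Set.mem_singleton_iff, a.injEq, not_or] at hk
    exact a_inf_sup_ne (fun h => hi' (by simp [← h])) hk.1 hk.2
      (hdist.1 _ hxS' _ (Or.inl rfl) _ (Or.inr rfl))
  · rintro ⟨T', hTT', hT', hdisj, hdist⟩
    obtain ⟨x, hxT', hx⟩ := Set.exists_of_ssubset hTT'
    obtain ⟨k, rfl⟩ := (mem_aLevel_or_mem_bLevel (hT' hxT')).resolve_right
      (Set.disjoint_right.mp (Set.disjoint_iff_inter_eq_empty.mpr hdisj) hxT')
    simp only [aLink, Set.mem_insert_iff, Set.mem_singleton_iff, a.injEq, Fin.ext_iff,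
      not_or] at hx
    exact b_inf_sup_ne (k := ⟨1, by omega⟩) (fun h => hx.2 (by simp [h])) hi' hx.1 one_ne_zero
      (hdist.1 _ ⟨_, rfl⟩ _ (hTT'.subset (Or.inr rfl)) _ hxT')

theorem maximalSTPair_aLevel (hn : 2 ≤ n) {j : Fin n} (hj : b j ≠ bLink n (by omega)) :
    MaximalSTPair n (aLevel n) {bLink n (by omega), b j} := by
  have hT : ({bLink n (by omega), b j} : Set (Mnn n)) ⊆ bLevel n := by
    rintro _ (rfl | rfl) <;> exact ⟨_, rfl⟩
  have hj' : (j : ℕ) ≠ 0 := fun h => hj (by simp [bLink, ← h])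
  refine ⟨fun _ => mem_star_of_mem_aLevel, fun _ hx => mem_star_of_mem_bLevel (hT hx),
    (disjoint_aLevel_bLevel.mono_right hT).inter_eq, ⟨_, ⟨0, by omega⟩, rfl⟩,
    ⟨_, Or.inl rfl⟩, isSTDistrib_aLevel _ j, ?_, ?_⟩
  · rintro ⟨S', hSS', hS', hdisj, hdist⟩
    obtain ⟨x, hxS', hx⟩ := Set.exists_of_ssubset hSS'
    obtain ⟨k, rfl⟩ := (mem_aLevel_or_mem_bLevel (hS' hxS')).resolve_left hx
    have hk : b k ∉ ({bLink n (by omega), b j} : Set (Mnn n)) :=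
      Set.disjoint_left.mp (Set.disjoint_iff_inter_eq_empty.mpr hdisj) hxS'
    simp only [bLink, Set.mem_insert_iff, Set.mem_singleton_iff, b.injEq, not_or] at hk
    exact b_sup_inf_ne (fun h => hj' (by simp [← h])) hk.1 hk.2
      (hdist.2 _ hxS' _ (Or.inl rfl) _ (Or.inr rfl))
  · rintro ⟨T', hTT', hT', hdisj, hdist⟩
    obtain ⟨x, hxT', hx⟩ := Set.exists_of_ssubset hTT'
    obtain ⟨k, rfl⟩ := (mem_aLevel_or_mem_bLevel (hT' hxT')).resolve_left
      (Set.disjoint_right.mp (Set.disjoint_iff_inter_eq_empty.mpr hdisj) hxT')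
    simp only [bLink, Set.mem_insert_iff, Set.mem_singleton_iff, b.injEq, Fin.ext_iff,
      not_or] at hx
    exact a_sup_inf_ne (k := ⟨0, by omega⟩) (fun h => hx.2 (by simp [h])) hj' hx.1
      (by simp only; omega)
      (hdist.2 _ ⟨_, rfl⟩ _ (hTT'.subset (Or.inr rfl)) _ hxT')

end Mnn

/-- S-level pairs are maximal `ST`-pairs of `M_{n,n}`: `S` is one whole level
`L₂` and `T` consists of the link `l` of the other level `L₁` together with
one further element `x ≠ l` of `L₁`. -/
theorem s_level_maximal (n : ℕ) (hn : 3 ≤ n) :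
    (∀ i : Fin n, Mnn.a i ≠ Mnn.aLink n (by omega) →
      MaximalSTPair n (Mnn.bLevel n) {Mnn.aLink n (by omega), Mnn.a i}) ∧
    (∀ j : Fin n, Mnn.b j ≠ Mnn.bLink n (by omega) →
      MaximalSTPair n (Mnn.aLevel n) {Mnn.bLink n (by omega), Mnn.b j}) :=
  ⟨fun _ => Mnn.maximalSTPair_bLevel (by omega), fun _ => Mnn.maximalSTPair_aLevel (by omega)⟩
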